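/- arXiv:2308.07594 — 2 statements merged into one kernel-verified Lean document; each statement's English description precedes it below -/
import Mathlib

section
/- Let v = [a_1,…,a_n] be a finite string of positive integers and let i be a positive integer. Then μ(C_{[v,i]}) / μ(C_v) = (s_n + 1) / ((s_n + i)(s_n + i + 1)), where s_n is the value of the reversed finite continued fraction [a_n,…,a_1]. -/
open MeasureTheory Filter

/-- The Gauss map `T x = 1/x - ⌊1/x⌋`. -/
noncomputable def gaussMap (x : ℝ) : ℝ := 1 / x - ⌊1 / x⌋

/-- The `i`-th continued fraction digit (0-indexed): `a_{i+1}(x) = ⌊1/T^i(x)⌋`. -/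
noncomputable def cfDigit (x : ℝ) (i : ℕ) : ℕ := (⌊1 / (gaussMap^[i] x)⌋).toNat

/-- The continued fraction cylinder of a finite string of positive integers. -/
def cfCylinder (v : List ℕ+) : Set ℝ :=
  {x | x ∈ Set.Ioo (0 : ℝ) 1 ∧ Irrational x ∧
    ∀ (i : ℕ) (hi : i < v.length), cfDigit x i = (v.get ⟨i, hi⟩ : ℕ)}

/-- The Gauss measure of a set: `γ(A) = (1/ln 2) ∫_A 1/(1+x) dx`. -/
noncomputable def gaussSet (A : Set ℝ) : ℝ := (1 / Real.log 2) * ∫ x in A, 1 / (1 + x)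

/-- A continued fraction `s`-gale. -/
def IsCFGale (s : ℝ) (d : List ℕ+ → ℝ) : Prop :=
  (∀ w, 0 ≤ d w) ∧
  ∀ w : List ℕ+,
    d w * gaussSet (cfCylinder w) ^ s =
      ∑' i : ℕ+, d (w ++ [i]) * gaussSet (cfCylinder (w ++ [i])) ^ s

/-- A binary `s`-gale. -/
def IsBinGale (s : ℝ) (h : List Bool → ℝ) : Prop :=
  (∀ w, 0 ≤ h w) ∧
  ∀ w : List Bool, h (w ++ [false]) + h (w ++ [true]) = (2 : ℝ) ^ s * h w

/-- The real number `0.w` for a finite binary string `w`. -/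
noncomputable def binVal (w : List Bool) : ℝ :=
  ∑ i ∈ Finset.range w.length, (if w.getD i false then ((2 : ℝ)⁻¹) ^ (i + 1) else 0)

/-- The dyadic cylinder `[0.w, 0.w + 2^{-|w|})`. -/
noncomputable def binCylinder (w : List Bool) : Set ℝ :=
  Set.Ico (binVal w) (binVal w + ((2 : ℝ)⁻¹) ^ w.length)

/-- The prefix of length `n` of the continued fraction expansion of `x`. -/
noncomputable def cfPrefix (x : ℝ) (n : ℕ) : List ℕ+ :=
  (List.range n).map fun i => (cfDigit x i).toPNat'

/-- The prefix of length `n` of the binary expansion of `x`. -/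
noncomputable def binPrefix (x : ℝ) (n : ℕ) : List Bool :=
  (List.range n).map fun i => decide (⌊x * 2 ^ (i + 1)⌋ % 2 = 1)

/-- The value of a finite continued fraction. -/
noncomputable def cfVal : List ℕ+ → ℝ
  | [] => 0
  | a :: w => 1 / (((a : ℕ) : ℝ) + cfVal w)

/-!
Up to rationals, the cylinder of `v = [a₁, …, aₙ]` is the interval between `ψ 0` and `ψ 1`, where
`ψ t = [a₁, …, aₙ + t]`, and the cylinder of `[v, i]` is the interval between `ψ (1 / i)` and
`ψ (1 / (i + 1))`. Since `ψ` is a Möbius map with pole at `-1 / s` (`∞` if `s = 0`), where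
`s = [aₙ, …, a₁]`, it satisfies `|ψ x - ψ y| = c |x - y| / ((1 + s x) (1 + s y))` for a constant
`c`, which cancels in the ratio of the two lengths.
-/

/-- The map `t ↦ [a₁, …, aₙ + t]`, that is `t ↦ 1/(a₁ + 1/(a₂ + ⋯ + 1/(aₙ + t)))`, for
`v = [a₁, …, aₙ]`: the inverse branch of the `n`-th iterate of the Gauss map whose image of `(0, 1)`
is, up to rationals, the cylinder of `v`. -/
noncomputable def cfBranch (v : List ℕ+) (t : ℝ) : ℝ :=
  v.foldr (fun (a : ℕ+) y => 1 / (((a : ℕ) : ℝ) + y)) t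

lemma cfBranch_nil (t : ℝ) : cfBranch [] t = t := rfl

lemma cfBranch_cons (a : ℕ+) (w : List ℕ+) (t : ℝ) :
    cfBranch (a :: w) t = 1 / (((a : ℕ) : ℝ) + cfBranch w t) := rfl

lemma cfBranch_append_singleton (v : List ℕ+) (a : ℕ+) (t : ℝ) :
    cfBranch (v ++ [a]) t = cfBranch v (1 / (((a : ℕ) : ℝ) + t)) := by
  simp [cfBranch]

lemma cfBranch_nonneg (v : List ℕ+) {t : ℝ} (ht : 0 ≤ t) : 0 ≤ cfBranch v t := by
  induction v with
  | nil => exact ht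
  | cons a w ih => rw [cfBranch_cons]; positivity

lemma cfVal_nonneg (v : List ℕ+) : 0 ≤ cfVal v := by
  induction v with
  | nil => exact le_rfl
  | cons a w ih => rw [cfVal]; positivity

lemma cfVal_reverse_append_singleton (v : List ℕ+) (a : ℕ+) :
    cfVal (v ++ [a]).reverse = 1 / (((a : ℕ) : ℝ) + cfVal v.reverse) := by
  rw [List.reverse_concat, cfVal]

lemma irrational_one_div_sub_natCast_iff {x : ℝ} {n : ℕ} :
    Irrational (1 / x - n) ↔ Irrational x := by
  rw [irrational_sub_natCast_iff, one_div, irrational_inv_iff]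

lemma mem_cfCylinder_nil {x : ℝ} : x ∈ cfCylinder [] ↔ x ∈ Set.Ioo 0 1 ∧ Irrational x := by
  simp [cfCylinder]

lemma cfDigit_zero_eq_iff {x : ℝ} {a : ℕ+} : cfDigit x 0 = a ↔ ⌊1 / x⌋ = ((a : ℕ) : ℤ) := by
  have ha := a.pos
  rw [cfDigit, Function.iterate_zero, id]
  omega

lemma gaussMap_mem_cfCylinder_nil {x : ℝ} (hx : Irrational x) : gaussMap x ∈ cfCylinder [] := by
  have hirr : Irrational (gaussMap x) := by
    rw [gaussMap, irrational_sub_intCast_iff, one_div, irrational_inv_iff]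
    exact hx
  have hpos : 0 < gaussMap x := (Int.fract_nonneg (1 / x)).lt_of_ne' hirr.ne_zero
  exact mem_cfCylinder_nil.2 ⟨⟨hpos, Int.fract_lt_one (1 / x)⟩, hirr⟩

lemma mem_cfCylinder_cons_iff_gaussMap {a : ℕ+} {w : List ℕ+} {x : ℝ} :
    x ∈ cfCylinder (a :: w) ↔
      x ∈ cfCylinder [] ∧ ⌊1 / x⌋ = ((a : ℕ) : ℤ) ∧ gaussMap x ∈ cfCylinder w := by
  rw [mem_cfCylinder_nil, ← cfDigit_zero_eq_iff]
  constructor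
  · rintro ⟨hx, hirr, hdigits⟩
    obtain ⟨hT, hTirr⟩ := mem_cfCylinder_nil.1 (gaussMap_mem_cfCylinder_nil hirr)
    -- `cfDigit x (i + 1)` is by definition `cfDigit (gaussMap x) i`.
    exact ⟨⟨hx, hirr⟩, hdigits 0 (by simp), hT, hTirr,
      fun i hi => hdigits (i + 1) (Nat.succ_lt_succ hi)⟩
  · rintro ⟨⟨hx, hirr⟩, hzero, -, -, hdigits⟩
    refine ⟨hx, hirr, fun i hi => ?_⟩
    cases i with
    | zero => exact hzero
    | succ i => exact hdigits i (Nat.lt_of_succ_lt_succ hi)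

lemma mem_cfCylinder_cons_iff {a : ℕ+} {w : List ℕ+} {x : ℝ} :
    x ∈ cfCylinder (a :: w) ↔ 0 < x ∧ 1 / x - ((a : ℕ) : ℝ) ∈ cfCylinder w := by
  have gaussMap_eq (h : ⌊1 / x⌋ = ((a : ℕ) : ℤ)) : gaussMap x = 1 / x - ((a : ℕ) : ℝ) := by
    rw [gaussMap, h, Int.cast_natCast]
  rw [mem_cfCylinder_cons_iff_gaussMap]
  constructor
  · rintro ⟨hx, hfloor, hT⟩
    exact ⟨hx.1.1, gaussMap_eq hfloor ▸ hT⟩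
  · rintro ⟨hx, hT⟩
    have ⟨⟨hT0, hT1⟩, hTirr, _⟩ := hT
    have hfloor : ⌊1 / x⌋ = ((a : ℕ) : ℤ) := by
      rw [Int.floor_eq_iff, Int.cast_natCast]
      constructor <;> linarith
    have ha : (1 : ℝ) ≤ (a : ℕ) := by exact_mod_cast a.pos
    have hx1 : x < 1 := (one_lt_div hx).1 (by linarith)
    exact ⟨mem_cfCylinder_nil.2 ⟨⟨hx, hx1⟩, irrational_one_div_sub_natCast_iff.1 hTirr⟩, hfloor,
      (gaussMap_eq hfloor).symm ▸ hT⟩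

lemma one_div_sub_mem_uIoo_iff {x a A B : ℝ} (hx : 0 < x) (hA : 0 < a + A) (hB : 0 < a + B) :
    1 / x - a ∈ Set.uIoo A B ↔ x ∈ Set.uIoo (1 / (a + A)) (1 / (a + B)) := by
  have hlt {C : ℝ} (hC : 0 < a + C) : 1 / x - a < C ↔ 1 / (a + C) < x := by
    rw [sub_lt_iff_lt_add', one_div_lt hx hC]
  have hgt {C : ℝ} (hC : 0 < a + C) : C < 1 / x - a ↔ x < 1 / (a + C) := by
    rw [lt_sub_iff_add_lt', lt_one_div hC hx]
  simp only [Set.uIoo, Set.mem_Ioo, inf_lt_iff, lt_sup_iff, hlt hA, hlt hB, hgt hA, hgt hB]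
  exact and_comm

lemma cfCylinder_eq_uIoo_diff_range_ratCast (v : List ℕ+) :
    cfCylinder v = Set.uIoo (cfBranch v 0) (cfBranch v 1) \ Set.range ((↑) : ℚ → ℝ) := by
  induction v with
  | nil =>
    ext x
    rw [mem_cfCylinder_nil, cfBranch_nil, cfBranch_nil, Set.uIoo_of_le zero_le_one]
    rfl
  | cons a w ih =>
    have h0 : 0 < ((a : ℕ) : ℝ) + cfBranch w 0 :=
      add_pos_of_pos_of_nonneg (by positivity) (cfBranch_nonneg w le_rfl)
    have h1 : 0 < ((a : ℕ) : ℝ) + cfBranch w 1 :=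
      add_pos_of_pos_of_nonneg (by positivity) (cfBranch_nonneg w zero_le_one)
    ext x
    rw [mem_cfCylinder_cons_iff, ih, cfBranch_cons, cfBranch_cons]
    constructor
    · rintro ⟨hx, hmem, hirr⟩
      exact ⟨(one_div_sub_mem_uIoo_iff hx h0 h1).1 hmem,
        irrational_one_div_sub_natCast_iff.1 hirr⟩
    · rintro ⟨hmem, hirr⟩
      have hx : 0 < x := (lt_min (one_div_pos.2 h0) (one_div_pos.2 h1)).trans hmem.1
      exact ⟨hx, (one_div_sub_mem_uIoo_iff hx h0 h1).2 hmem,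
        irrational_one_div_sub_natCast_iff.2 hirr⟩

lemma volume_real_cfCylinder (v : List ℕ+) :
    volume.real (cfCylinder v) = |cfBranch v 1 - cfBranch v 0| := by
  rw [cfCylinder_eq_uIoo_diff_range_ratCast, measureReal_def,
    measure_sdiff_null ((Set.countable_range _).measure_zero volume), Real.volume_uIoo,
    ENNReal.toReal_ofReal (abs_nonneg _)]

lemma abs_one_div_add_sub_one_div_add_div {a s x y : ℝ} (ha : 0 < a) (hs : 0 ≤ s) (hx : 0 ≤ x)
    (hy : 0 ≤ y) :
    |1 / (a + x) - 1 / (a + y)| / ((1 + s * (1 / (a + x))) * (1 + s * (1 / (a + y)))) =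
      |x - y| / ((a + s + x) * (a + s + y)) := by
  have hsub : |1 / (a + x) - 1 / (a + y)| = |x - y| / ((a + x) * (a + y)) := by
    rw [div_sub_div _ _ (by positivity) (by positivity), abs_div, abs_sub_comm x y,
      abs_of_pos (by positivity : 0 < (a + x) * (a + y))]
    ring_nf
  rw [hsub]
  field_simp
  ring

/-- In terms of the denominators `qₖ` of the convergents `[a₁, …, aₖ]`, the constant is `1 / qₙ²`
and `cfVal v.reverse` is `qₙ₋₁ / qₙ`. -/
lemma exists_abs_cfBranch_sub_eq (v : List ℕ+) :
    ∃ c > 0, ∀ x y : ℝ, 0 ≤ x → 0 ≤ y →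
      |cfBranch v x - cfBranch v y| =
        c * (|x - y| / ((1 + cfVal v.reverse * x) * (1 + cfVal v.reverse * y))) := by
  induction v using List.reverseRecOn with
  | nil => exact ⟨1, one_pos, fun x y _ _ => by simp [cfBranch_nil, cfVal]⟩
  | append_singleton v a ih =>
    obtain ⟨c, hc, hdist⟩ := ih
    have hs : 0 ≤ cfVal v.reverse := cfVal_nonneg _
    have ha : (0 : ℝ) < (a : ℕ) := by positivity
    refine ⟨c / ((a : ℕ) + cfVal v.reverse) ^ 2, by positivity, fun x y hx hy => ?_⟩
    rw [cfBranch_append_singleton, cfBranch_append_singleton,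
      hdist _ _ (by positivity) (by positivity), abs_one_div_add_sub_one_div_add_div ha hs hx hy,
      cfVal_reverse_append_singleton]
    field_simp

theorem stmt8 (v : List ℕ+) (i : ℕ+) :
    (volume (cfCylinder (v ++ [i]))).toReal / (volume (cfCylinder v)).toReal =
      (cfVal v.reverse + 1) /
        ((cfVal v.reverse + ((i : ℕ) : ℝ)) * (cfVal v.reverse + ((i : ℕ) : ℝ) + 1)) := by
  obtain ⟨c, hc, hdist⟩ := exists_abs_cfBranch_sub_eq v
  have hs : 0 ≤ cfVal v.reverse := cfVal_nonneg _
  have hi : (0 : ℝ) < (i : ℕ) := by positivity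
  have hv : volume.real (cfCylinder v) = c / (cfVal v.reverse + 1) := by
    rw [volume_real_cfCylinder, hdist 1 0 zero_le_one le_rfl]
    simp [add_comm, div_eq_mul_inv]
  have hvi : volume.real (cfCylinder (v ++ [i])) =
      c / ((cfVal v.reverse + (i : ℕ)) * (cfVal v.reverse + (i : ℕ) + 1)) := by
    rw [volume_real_cfCylinder, cfBranch_append_singleton, cfBranch_append_singleton,
      hdist _ _ (by positivity) (by positivity),
      abs_one_div_add_sub_one_div_add_div hi hs zero_le_one le_rfl]
    simp [div_eq_mul_inv, add_comm, mul_comm]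
  rw [← measureReal_def, ← measureReal_def, hv, hvi]
  field_simp
end

section
/- Fix 0 < s < 1/2 and define reals a_1 = 1 and, for k ≥ 2, a_k = 2·(k·∏_{i=1}^{k−1} 100·a_i)^{1/s}; set b_k = 50·a_k. Let F_{k−1} be the set of strings [v_1,…,v_{k−1}] of positive integers with a_i ≤ v_i ≤ b_i for 1 ≤ i ≤ k−1 (F_0 consists of the empty string). Then for every k ≥ 1, ∑_{v ∈ F_{k−1}} μ(⋃_{i ∈ ℕ, a_k ≤ i ≤ b_k} C_{[v,i]})^s ≤ 1/k. -/
open MeasureTheory Filter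

/-- The set of strings `[v_1, …, v_m]` of positive integers with `A (i+1) ≤ v_{i+1} ≤ 50 · A (i+1)`. -/
def Fset (A : ℕ → ℝ) (m : ℕ) : Set (List ℕ+) :=
  {l | l.length = m ∧ ∀ (i : ℕ) (hi : i < l.length),
    A (i + 1) ≤ ((l.get ⟨i, hi⟩ : ℕ) : ℝ) ∧ ((l.get ⟨i, hi⟩ : ℕ) : ℝ) ≤ 50 * A (i + 1)}

/-!
Inverting a number in `(0, 1)` expands distances and subtracting a common digit preserves them, so
the `n`-th iterate of the Gauss map expands distances on a cylinder of length `n`. On the union of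
the cylinders `C_[v,i]` with `i ≥ a` this iterate takes values in `(0, 1 / a]`, so the union has
diameter, hence measure, at most `1 / a`. There are at most `∏_{i < k} 50 a_i` strings in
`F_{k-1}`, and `a_k` is chosen so that `a_k ^ s ≥ k ∏_{i < k} 100 a_i`.
-/

section GaussMap

variable {x y : ℝ}

lemma gaussMap_eq_fract (x : ℝ) : gaussMap x = Int.fract (1 / x) := rfl

lemma irrational_gaussMap (hx : Irrational x) : Irrational (gaussMap x) := by
  rw [gaussMap, one_div]
  exact (irrational_inv_iff.mpr hx).sub_intCast _

lemma gaussMap_mem_Ioo (hx : Irrational x) : gaussMap x ∈ Set.Ioo 0 1 := by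
  have hne : gaussMap x ≠ 0 := (irrational_gaussMap hx).ne_zero
  rw [gaussMap_eq_fract] at hne ⊢
  exact ⟨(Int.fract_nonneg _).lt_of_ne' hne, Int.fract_lt_one _⟩

lemma irrational_iterate_gaussMap (hx : Irrational x) (n : ℕ) : Irrational (gaussMap^[n] x) :=
  Function.Iterate.rec Irrational hx (fun _ h => irrational_gaussMap h) n

lemma iterate_gaussMap_mem_Ioo (hx : x ∈ Set.Ioo 0 1) (hirr : Irrational x) (n : ℕ) :
    gaussMap^[n] x ∈ Set.Ioo 0 1 := by
  cases n with
  | zero => exact hx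
  | succ n =>
    rw [Function.iterate_succ_apply']
    exact gaussMap_mem_Ioo (irrational_iterate_gaussMap hirr n)

lemma one_div_iterate_gaussMap (hx : x ∈ Set.Ioo 0 1) (hirr : Irrational x) (n : ℕ) :
    1 / gaussMap^[n] x = cfDigit x n + gaussMap^[n + 1] x := by
  have hpos : 0 < gaussMap^[n] x := (iterate_gaussMap_mem_Ioo hx hirr n).1
  have hdigit : (cfDigit x n : ℤ) = ⌊1 / gaussMap^[n] x⌋ :=
    Int.toNat_of_nonneg (Int.floor_nonneg.mpr (by positivity))
  rw [Function.iterate_succ_apply', gaussMap_eq_fract, ← Int.cast_natCast, hdigit,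
    Int.floor_add_fract]

lemma dist_le_dist_one_div (hx : x ∈ Set.Ioc 0 1) (hy : y ∈ Set.Ioc 0 1) :
    dist x y ≤ dist (1 / x) (1 / y) := by
  have hfactor : x - y = -((1 / x - 1 / y) * (x * y)) := by
    field_simp [hx.1.ne', hy.1.ne']
    ring
  rw [Real.dist_eq, Real.dist_eq, hfactor, abs_neg, abs_mul, abs_of_pos (mul_pos hx.1 hy.1)]
  exact mul_le_of_le_one_right (abs_nonneg _) (mul_le_one₀ hx.2 hy.1.le hy.2)

end GaussMap

lemma forall_get_append_singleton {α : Type*} {l : List α} {a : α} {p : ℕ → α → Prop} :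
    (∀ (j : ℕ) (hj : j < (l ++ [a]).length), p j ((l ++ [a]).get ⟨j, hj⟩)) ↔
      (∀ (j : ℕ) (hj : j < l.length), p j (l.get ⟨j, hj⟩)) ∧ p l.length a := by
  constructor
  · intro h
    refine ⟨fun j hj => ?_, by simpa using h l.length (by simp)⟩
    simpa [List.getElem_append_left hj] using h j (hj.trans (by simp))
  · rintro ⟨hinit, hlast⟩ j hj
    obtain hj | rfl := Nat.lt_succ_iff_lt_or_eq.mp (hj.trans_eq List.length_append)
    · simpa [List.getElem_append_left hj] using hinit j hj
    · simpa using hlast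

section Cylinder

variable {v : List ℕ+} {i : ℕ+} {x y : ℝ}

lemma mem_cfCylinder_append_singleton :
    x ∈ cfCylinder (v ++ [i]) ↔ x ∈ cfCylinder v ∧ cfDigit x v.length = i := by
  have hsplit := forall_get_append_singleton (l := v) (a := i) (p := fun j a => cfDigit x j = a)
  exact ⟨fun ⟨hx01, hirr, h⟩ => ⟨⟨hx01, hirr, (hsplit.mp h).1⟩, (hsplit.mp h).2⟩,
    fun ⟨⟨hx01, hirr, hinit⟩, hlast⟩ => ⟨hx01, hirr, hsplit.mpr ⟨hinit, hlast⟩⟩⟩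

lemma dist_le_dist_iterate_gaussMap (hx : x ∈ cfCylinder v) (hy : y ∈ cfCylinder v) :
    dist x y ≤ dist (gaussMap^[v.length] x) (gaussMap^[v.length] y) := by
  induction v using List.reverseRecOn with
  | nil => rfl
  | append_singleton v i ih =>
    rw [mem_cfCylinder_append_singleton] at hx hy
    obtain ⟨⟨hx01, hxirr, hxv⟩, hxi⟩ := hx
    obtain ⟨⟨hy01, hyirr, hyv⟩, hyi⟩ := hy
    calc dist x y ≤ dist (gaussMap^[v.length] x) (gaussMap^[v.length] y) :=
          ih ⟨hx01, hxirr, hxv⟩ ⟨hy01, hyirr, hyv⟩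
      _ ≤ dist (1 / gaussMap^[v.length] x) (1 / gaussMap^[v.length] y) :=
          dist_le_dist_one_div
            (Set.Ioo_subset_Ioc_self (iterate_gaussMap_mem_Ioo hx01 hxirr v.length))
            (Set.Ioo_subset_Ioc_self (iterate_gaussMap_mem_Ioo hy01 hyirr v.length))
      _ = dist (gaussMap^[(v ++ [i]).length] x) (gaussMap^[(v ++ [i]).length] y) := by
          rw [one_div_iterate_gaussMap hx01 hxirr, one_div_iterate_gaussMap hy01 hyirr, hxi, hyi,
            dist_add_left, List.length_append, List.length_singleton]

lemma iterate_gaussMap_mem_Ioc_of_mem_cfCylinder (hx : x ∈ cfCylinder (v ++ [i])) :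
    gaussMap^[v.length] x ∈ Set.Ioc 0 (1 / (i : ℝ)) := by
  obtain ⟨⟨hx01, hirr, -⟩, hdigit⟩ := mem_cfCylinder_append_singleton.mp hx
  have hpos : 0 < gaussMap^[v.length] x := (iterate_gaussMap_mem_Ioo hx01 hirr _).1
  have hinv : (i : ℝ) ≤ 1 / gaussMap^[v.length] x := by
    rw [one_div_iterate_gaussMap hx01 hirr, hdigit]
    exact le_add_of_nonneg_right (iterate_gaussMap_mem_Ioo hx01 hirr _).1.le
  exact ⟨hpos, (le_one_div (by positivity) hpos).mp hinv⟩

lemma volume_biUnion_cfCylinder_append_singleton_le (v : List ℕ+) {I : Set ℕ+} {a : ℝ}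
    (ha : 0 < a) (hI : ∀ i ∈ I, a ≤ (i : ℕ)) :
    volume (⋃ i ∈ I, cfCylinder (v ++ [i])) ≤ ENNReal.ofReal (1 / a) := by
  have hmem : ∀ x ∈ ⋃ i ∈ I, cfCylinder (v ++ [i]),
      x ∈ cfCylinder v ∧ gaussMap^[v.length] x ∈ Set.Icc 0 (1 / a) := by
    intro x hx
    obtain ⟨i, hi, hxi⟩ := Set.mem_iUnion₂.mp hx
    have hT := iterate_gaussMap_mem_Ioc_of_mem_cfCylinder hxi
    exact ⟨(mem_cfCylinder_append_singleton.mp hxi).1, hT.1.le,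
      hT.2.trans (one_div_le_one_div_of_le ha (hI i hi))⟩
  refine (Real.volume_le_diam _).trans (Metric.ediam_le fun x hx y hy => ?_)
  obtain ⟨hxv, hTx⟩ := hmem x hx
  obtain ⟨hyv, hTy⟩ := hmem y hy
  rw [edist_dist]
  refine ENNReal.ofReal_le_ofReal ((dist_le_dist_iterate_gaussMap hxv hyv).trans ?_)
  simpa only [sub_zero] using Real.dist_le_of_mem_Icc hTx hTy

end Cylinder

section Fset

variable {A : ℕ → ℝ}

lemma append_singleton_mem_Fset {m : ℕ} {v : List ℕ+} {i : ℕ+} :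
    v ++ [i] ∈ Fset A (m + 1) ↔
      v ∈ Fset A m ∧ A (m + 1) ≤ (i : ℕ) ∧ ((i : ℕ) : ℝ) ≤ 50 * A (m + 1) := by
  have hsplit := forall_get_append_singleton (l := v) (a := i)
    (p := fun j a => A (j + 1) ≤ (a : ℕ) ∧ ((a : ℕ) : ℝ) ≤ 50 * A (j + 1))
  constructor
  · rintro ⟨hlen, h⟩
    obtain rfl : v.length = m := by simpa using hlen
    exact ⟨⟨rfl, (hsplit.mp h).1⟩, (hsplit.mp h).2⟩
  · rintro ⟨⟨rfl, hinit⟩, hlast⟩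
    exact ⟨List.length_append, hsplit.mpr ⟨hinit, hlast⟩⟩

lemma Fset_zero : Fset A 0 = {[]} := by
  ext v
  simp +contextual [Fset, List.length_eq_zero_iff]

lemma Fset_succ (A : ℕ → ℝ) (m : ℕ) :
    Fset A (m + 1) = Set.image2 (fun v i => v ++ [i]) (Fset A m)
      {i : ℕ+ | A (m + 1) ≤ (i : ℕ) ∧ ((i : ℕ) : ℝ) ≤ 50 * A (m + 1)} := by
  ext w
  constructor
  · intro hw
    obtain rfl | ⟨v, i, rfl⟩ := List.eq_nil_or_concat' w
    · cases hw.1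
    · obtain ⟨hv, hi⟩ := append_singleton_mem_Fset.mp hw
      exact ⟨v, hv, i, hi, rfl⟩
  · rintro ⟨v, hv, i, hi, rfl⟩
    exact append_singleton_mem_Fset.mpr ⟨hv, hi⟩

lemma finite_setOf_pnat_le (b : ℝ) : {i : ℕ+ | ((i : ℕ) : ℝ) ≤ b}.Finite :=
  ((Set.finite_Iic ⌊b⌋₊).preimage PNat.coe_injective.injOn).subset fun _ hi => Nat.le_floor hi

lemma ncard_setOf_pnat_le {b : ℝ} (hb : 0 ≤ b) :
    ({i : ℕ+ | ((i : ℕ) : ℝ) ≤ b}.ncard : ℝ) ≤ b := by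
  have hcard : {i : ℕ+ | ((i : ℕ) : ℝ) ≤ b}.ncard ≤ (Finset.Icc 1 ⌊b⌋₊ : Set ℕ).ncard :=
    Set.ncard_le_ncard_of_injOn (fun i : ℕ+ => (i : ℕ))
      (fun i hi => by simpa using ⟨i.pos, Nat.le_floor hi⟩) PNat.coe_injective.injOn
  rw [Set.ncard_coe_finset, Nat.card_Icc, Nat.add_sub_cancel] at hcard
  exact (Nat.cast_le.mpr hcard).trans (Nat.floor_le hb)

lemma finite_Fset (A : ℕ → ℝ) (m : ℕ) : (Fset A m).Finite := by
  induction m with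
  | zero => simp [Fset_zero]
  | succ m ih =>
    rw [Fset_succ]
    exact ih.image2 _ ((finite_setOf_pnat_le _).subset fun _ hi => hi.2)

lemma ncard_Fset_le (m : ℕ) (hA : ∀ i ∈ Finset.Icc 1 m, 0 ≤ A i) :
    ((Fset A m).ncard : ℝ) ≤ ∏ i ∈ Finset.Icc 1 m, 50 * A i := by
  induction m with
  | zero => simp [Fset_zero]
  | succ m ih =>
    have hA' : ∀ i ∈ Finset.Icc 1 m, 0 ≤ A i := fun i hi =>
      hA i (Finset.Icc_subset_Icc_right m.le_succ hi)
    have hb : 0 ≤ 50 * A (m + 1) := mul_nonneg (by norm_num) (hA _ (by simp))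
    set D := {i : ℕ+ | A (m + 1) ≤ (i : ℕ) ∧ ((i : ℕ) : ℝ) ≤ 50 * A (m + 1)}
    have hDb : D ⊆ {i : ℕ+ | ((i : ℕ) : ℝ) ≤ 50 * A (m + 1)} := fun _ hi => hi.2
    have hDcard : (D.ncard : ℝ) ≤ 50 * A (m + 1) :=
      (Nat.cast_le.mpr (Set.ncard_le_ncard hDb (finite_setOf_pnat_le _))).trans
        (ncard_setOf_pnat_le hb)
    have hprod : (Fset A (m + 1)).ncard ≤ (Fset A m).ncard * D.ncard := by
      rw [Fset_succ, ← Set.image_uncurry_prod, ← Set.ncard_prod]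
      exact Set.ncard_image_le ((finite_Fset A m).prod ((finite_setOf_pnat_le _).subset hDb))
    calc ((Fset A (m + 1)).ncard : ℝ) ≤ (Fset A m).ncard * D.ncard := mod_cast hprod
      _ ≤ (∏ i ∈ Finset.Icc 1 m, 50 * A i) * (50 * A (m + 1)) := by
          gcongr
          · exact Finset.prod_nonneg fun i hi => mul_nonneg (by norm_num) (hA' i hi)
          · exact ih hA'
      _ = ∏ i ∈ Finset.Icc 1 (m + 1), 50 * A i := (Finset.prod_Icc_succ_top (by omega) _).symm

lemma tsum_Fset_volume_rpow_le {s a : ℝ} {I : Set ℕ+} (m : ℕ) (hs : 0 ≤ s)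
    (hA : ∀ i ∈ Finset.Icc 1 m, 0 ≤ A i) (ha : 0 < a) (hI : ∀ i ∈ I, a ≤ (i : ℕ)) :
    ∑' v : Fset A m, (volume (⋃ i ∈ I, cfCylinder ((v : List ℕ+) ++ [i]))).toReal ^ s ≤
      (∏ i ∈ Finset.Icc 1 m, 50 * A i) / a ^ s := by
  have hterm : ∀ v : List ℕ+,
      (volume (⋃ i ∈ I, cfCylinder (v ++ [i]))).toReal ^ s ≤ 1 / a ^ s := by
    intro v
    have hvol := ENNReal.toReal_le_of_le_ofReal (by positivity)
      (volume_biUnion_cfCylinder_append_singleton_le v ha hI)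
    calc (volume (⋃ i ∈ I, cfCylinder (v ++ [i]))).toReal ^ s ≤ (1 / a) ^ s := by gcongr
      _ = 1 / a ^ s := by rw [Real.div_rpow zero_le_one ha.le, Real.one_rpow]
  have := (finite_Fset A m).fintype
  calc ∑' v : Fset A m, (volume (⋃ i ∈ I, cfCylinder ((v : List ℕ+) ++ [i]))).toReal ^ s
      ≤ (Fset A m).ncard * (1 / a ^ s) := by
        rw [tsum_fintype, ← Nat.card_coe_set_eq, Nat.card_eq_fintype_card, ← nsmul_eq_mul]
        exact Finset.sum_le_card_nsmul _ _ _ fun v _ => hterm v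
    _ ≤ (∏ i ∈ Finset.Icc 1 m, 50 * A i) * (1 / a ^ s) := by
        gcongr
        exact ncard_Fset_le m hA
    _ = (∏ i ∈ Finset.Icc 1 m, 50 * A i) / a ^ s := mul_one_div _ _

end Fset

section Recurrence

variable {s : ℝ} {A : ℕ → ℝ}

lemma pos_of_recurrence (hA1 : A 1 = 1)
    (hAk : ∀ k : ℕ, 2 ≤ k →
      A k = 2 * ((k : ℝ) * ∏ i ∈ Finset.Icc 1 (k - 1), 100 * A i) ^ (1 / s))
    {k : ℕ} (hk : 1 ≤ k) : 0 < A k := by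
  induction k using Nat.strong_induction_on with
  | _ k ih =>
    obtain rfl | hk2 := hk.eq_or_lt
    · simp only [hA1, zero_lt_one]
    · have hprod : 0 < ∏ i ∈ Finset.Icc 1 (k - 1), 100 * A i := by
        refine Finset.prod_pos fun i hi => ?_
        rw [Finset.mem_Icc] at hi
        exact mul_pos (by norm_num) (ih i (by omega) hi.1)
      rw [hAk k hk2]
      positivity

lemma mul_prod_le_rpow_of_recurrence (hs : 0 < s) (hA1 : A 1 = 1)
    (hAk : ∀ k : ℕ, 2 ≤ k →
      A k = 2 * ((k : ℝ) * ∏ i ∈ Finset.Icc 1 (k - 1), 100 * A i) ^ (1 / s))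
    {k : ℕ} (hk : 1 ≤ k) :
    k * ∏ i ∈ Finset.Icc 1 (k - 1), 100 * A i ≤ A k ^ s := by
  obtain rfl | hk2 := hk.eq_or_lt
  · simp [hA1]
  · set Q : ℝ := k * ∏ i ∈ Finset.Icc 1 (k - 1), 100 * A i
    have hQ0 : 0 ≤ Q := mul_nonneg k.cast_nonneg <| Finset.prod_nonneg fun i hi =>
      mul_nonneg (by norm_num) (pos_of_recurrence hA1 hAk (Finset.mem_Icc.mp hi).1).le
    have hroot : Q ^ (1 / s) ≤ A k := by
      rw [hAk k hk2]
      exact le_mul_of_one_le_left (by positivity) one_le_two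
    calc Q = (Q ^ (1 / s)) ^ s := by
          rw [← Real.rpow_mul hQ0, one_div_mul_cancel hs.ne', Real.rpow_one]
      _ ≤ A k ^ s := by gcongr

end Recurrence

theorem stmt14_general (s : ℝ) (hs : 0 < s) (A : ℕ → ℝ)
    (hA1 : A 1 = 1)
    (hAk : ∀ k : ℕ, 2 ≤ k →
      A k = 2 * ((k : ℝ) * ∏ i ∈ Finset.Icc 1 (k - 1), 100 * A i) ^ (1 / s)) :
    ∀ k : ℕ, 1 ≤ k →
      (∑' v : Fset A (k - 1),
        (volume (⋃ i ∈ {i : ℕ+ | A k ≤ ((i : ℕ) : ℝ) ∧ ((i : ℕ) : ℝ) ≤ 50 * A k},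
          cfCylinder ((v : List ℕ+) ++ [i]))).toReal ^ s) ≤ 1 / (k : ℝ) := by
  intro k hk
  have hpos : ∀ i ∈ Finset.Icc 1 (k - 1), 0 < A i := fun i hi =>
    pos_of_recurrence hA1 hAk (Finset.mem_Icc.mp hi).1
  have hprod : 0 < ∏ i ∈ Finset.Icc 1 (k - 1), 100 * A i :=
    Finset.prod_pos fun i hi => mul_pos (by norm_num) (hpos i hi)
  calc _ ≤ (∏ i ∈ Finset.Icc 1 (k - 1), 50 * A i) / A k ^ s :=
        tsum_Fset_volume_rpow_le (k - 1) hs.le (fun i hi => (hpos i hi).le)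
          (pos_of_recurrence hA1 hAk hk) fun _ hi => hi.1
    _ ≤ (∏ i ∈ Finset.Icc 1 (k - 1), 100 * A i) /
          (k * ∏ i ∈ Finset.Icc 1 (k - 1), 100 * A i) := by
        have hAs := mul_prod_le_rpow_of_recurrence hs hA1 hAk hk
        gcongr with i hi
        · exact fun i hi => by have := hpos i hi; positivity
        · exact (hpos i hi).le
        · norm_num
    _ = 1 / k := by field_simp

theorem stmt14 (s : ℝ) (h0 : 0 < s) (h1 : s < 1 / 2) (A : ℕ → ℝ)
    (hA1 : A 1 = 1)
    (hAk : ∀ k : ℕ, 2 ≤ k →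
      A k = 2 * ((k : ℝ) * ∏ i ∈ Finset.Icc 1 (k - 1), 100 * A i) ^ (1 / s)) :
    ∀ k : ℕ, 1 ≤ k →
      (∑' v : Fset A (k - 1),
        (volume (⋃ i ∈ {i : ℕ+ | A k ≤ ((i : ℕ) : ℝ) ∧ ((i : ℕ) : ℝ) ≤ 50 * A k},
          cfCylinder ((v : List ℕ+) ++ [i]))).toReal ^ s) ≤ 1 / (k : ℝ) :=
  stmt14_general s h0 A hA1 hAk
end
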